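/- Let p > 3 be a prime and let a, b ∈ ℚ_p be nonzero with |b|_p < 1, |a|_p = 1, and (−a_0)^{(p−1)/2} ≡ 1 (mod p). Then the equation x³ + a·x = b has exactly two distinct solutions x ∈ ℚ_p with |x|_p = 1. -/

import Mathlib

/-!
Modulo `p` the equation becomes `x³ = s²x` with `s² = -a`, whose nonzero solutions are the two
elements `±s`; they are distinct because `p` is odd. The derivative `3x² + a` takes the nonzero
value `2s²` at both, so by Hensel's lemma each lifts to exactly one solution in `ℤ_[p]`, and every
solution of norm one arises in this way. The argument works over any Henselian local ring whose
residue field has characteristic different from two.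
-/

open Polynomial

universe u

section LocalRing

theorem isUnit_iff_map_ne_zero_of_surjective {R K : Type*} [CommRing R] [IsLocalRing R] [Field K]
    {φ : R →+* K} (hφ : Function.Surjective φ) {x : R} : IsUnit x ↔ φ x ≠ 0 := by
  have : IsLocalHom φ := .of_surjective φ hφ
  rw [← isUnit_map_iff φ, isUnit_iff_ne_zero]

variable {R K : Type u} [CommRing R] [HenselianLocalRing R] [Field K] {φ : R →+* K}

theorem existsUnique_isRoot_map_eq_of_simple_root (hφ : Function.Surjective φ) {f : R[X]}
    (hf : f.Monic) {r : K} (hr : f.eval₂ φ r = 0) (hr' : f.derivative.eval₂ φ r ≠ 0) :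
    ∃! x, f.IsRoot x ∧ φ x = r := by
  have lift_root := ((HenselianLocalRing.TFAE R).out 0 2).mp ‹_›
  obtain ⟨x, hx, rfl⟩ := lift_root φ hφ f hf r hr hr'
  refine ⟨x, ⟨hx, rfl⟩, fun y ⟨hy, hyx⟩ ↦ ?_⟩
  have not_isUnit_sub : ¬ IsUnit (x - y) := by
    simp [isUnit_iff_map_ne_zero_of_surjective hφ, hyx]
  have isUnit_derivative : IsUnit (f.derivative.eval x) := by
    rwa [isUnit_iff_map_ne_zero_of_surjective hφ, ← eval₂_at_apply]
  exact (IsLocalRing.eq_of_eval_eq_zero_of_not_isUnit_sub hx hy not_isUnit_sub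
    isUnit_derivative).symm

theorem existsUnique_cubic_eq_and_map_eq (hφ : Function.Surjective φ)
    (h2 : (2 : K) ≠ 0) {A B : R} (hB : φ B = 0) {s : K} (hs : s ≠ 0) (hA : -φ A = s ^ 2) :
    ∃! x, x ^ 3 + A * x = B ∧ φ x = s := by
  let f : R[X] := X ^ 3 + C A * X - C B
  have monic_f : f.Monic := by
    dsimp only [f]
    monicity!
  have eval₂_f : f.eval₂ φ s = 0 := by
    simp only [f, eval₂_sub, eval₂_add, eval₂_mul, eval₂_pow, eval₂_X, eval₂_C, hB]
    linear_combination -s * hA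
  have eval₂_derivative_f : f.derivative.eval₂ φ s = 2 * s ^ 2 := by
    have derivative_f : f.derivative = C 3 * X ^ 2 + C A := by
      simp only [f, derivative_sub, derivative_add, derivative_X_pow, derivative_C_mul,
        derivative_X, derivative_C, mul_one, sub_zero]
      norm_num
    simp only [derivative_f, eval₂_add, eval₂_mul, eval₂_pow, eval₂_X, eval₂_C]
    linear_combination s ^ 2 * map_ofNat φ 3 - hA
  have isRoot_iff (x : R) : f.IsRoot x ↔ x ^ 3 + A * x = B := by
    simp [f, sub_eq_zero]
  simpa only [isRoot_iff] using existsUnique_isRoot_map_eq_of_simple_root hφ monic_f eval₂_f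
    (eval₂_derivative_f ▸ mul_ne_zero h2 (pow_ne_zero 2 hs))

theorem exists_pair_isUnit_cubic_eq_iff (hφ : Function.Surjective φ)
    (h2 : (2 : K) ≠ 0) {A B : R} (hB : φ B = 0) (hA : φ A ≠ 0) (hsq : IsSquare (-φ A)) :
    ∃ x y : R, x ≠ y ∧ ∀ w, IsUnit w ∧ w ^ 3 + A * w = B ↔ w = x ∨ w = y := by
  obtain ⟨s, hs⟩ := isSquare_iff_exists_sq _ |>.mp hsq
  have hs0 : s ≠ 0 := by
    rintro rfl
    simp [hA] at hs
  obtain ⟨x, ⟨hx, hxs⟩, x_unique⟩ := existsUnique_cubic_eq_and_map_eq hφ h2 hB hs0 hs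
  obtain ⟨y, ⟨hy, hys⟩, y_unique⟩ :=
    existsUnique_cubic_eq_and_map_eq hφ h2 hB (neg_ne_zero.mpr hs0) (hs.trans (neg_sq s).symm)
  refine ⟨x, y, ?_, fun w ↦ ⟨fun ⟨hw, hwB⟩ ↦ ?_, ?_⟩⟩
  · rintro rfl
    have two_mul_s : 2 * s = 0 := by linear_combination hys - hxs
    exact mul_ne_zero h2 hs0 two_mul_s
  · have hw0 : φ w ≠ 0 := (isUnit_iff_map_ne_zero_of_surjective hφ).mp hw
    have reduced_eq : φ w ^ 3 + φ A * φ w = 0 := by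
      simpa [hB] using congrArg φ hwB
    have sq_eq : φ w ^ 2 = s ^ 2 := mul_right_cancel₀ hw0 <| by
      linear_combination reduced_eq + φ w * hs
    exact (sq_eq_sq_iff_eq_or_eq_neg.mp sq_eq).imp
      (fun h ↦ x_unique w ⟨hwB, h⟩) (fun h ↦ y_unique w ⟨hwB, h⟩)
  · rw [isUnit_iff_map_ne_zero_of_surjective hφ]
    rintro (rfl | rfl)
    · exact ⟨hxs ▸ hs0, hx⟩
    · exact ⟨hys ▸ neg_ne_zero.mpr hs0, hy⟩

end LocalRing

section Padic

variable {p : ℕ} [Fact p.Prime]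

instance henselianLocalRing_padicInt : HenselianLocalRing ℤ_[p] where
  is_henselian f hf r hr hr' :=
    HenselianRing.is_henselian f hf r hr (hr'.map (Ideal.Quotient.mk _))

theorem padicInt_toZMod_eq_zero_iff {x : ℤ_[p]} : PadicInt.toZMod x = 0 ↔ ‖x‖ < 1 := by
  rw [← RingHom.mem_ker, PadicInt.ker_toZMod, IsLocalRing.mem_maximalIdeal, PadicInt.mem_nonunits]

theorem padicInt_toZMod_ne_zero_iff {x : ℤ_[p]} : PadicInt.toZMod x ≠ 0 ↔ ‖x‖ = 1 := by
  rw [← PadicInt.isUnit_iff,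
    isUnit_iff_map_ne_zero_of_surjective (ZMod.ringHom_surjective PadicInt.toZMod)]

theorem padicInt_toZMod_eq_natCast_iff {x : ℤ_[p]} {n : ℕ} :
    PadicInt.toZMod x = n ↔ ‖(x : ℚ_[p]) - n‖ < 1 := by
  rw [← sub_eq_zero, ← map_natCast PadicInt.toZMod n, ← map_sub, padicInt_toZMod_eq_zero_iff]
  simp [PadicInt.norm_def]

theorem padic_valuation_eq_zero_of_norm_eq_one {x : ℚ_[p]} (hx : ‖x‖ = 1) : x.valuation = 0 := by
  have one_lt_p : (1 : ℝ) < p := mod_cast (Fact.out : p.Prime).one_lt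
  have hx0 : x ≠ 0 := norm_ne_zero_iff.mp (hx ▸ one_ne_zero)
  rw [Padic.norm_eq_zpow_neg_valuation hx0,
    zpow_eq_one_iff_right₀ (by positivity) one_lt_p.ne'] at hx
  exact neg_eq_zero.mp hx

theorem exists_pair_padic_cubic_eq_iff (hp : p ≠ 2) {A B : ℤ_[p]} (hB : ‖B‖ < 1) (hA : ‖A‖ = 1)
    (hsq : IsSquare (-PadicInt.toZMod A)) :
    ∃ x y : ℚ_[p], x ≠ y ∧ ∀ w : ℚ_[p], ‖w‖ = 1 ∧ w ^ 3 + A * w = B ↔ w = x ∨ w = y := by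
  have two_ne : (2 : ZMod p) ≠ 0 := Ring.two_ne_zero (by rwa [ZMod.ringChar_zmod_n])
  obtain ⟨x, y, hxy, h⟩ := exists_pair_isUnit_cubic_eq_iff (ZMod.ringHom_surjective _) two_ne
    (padicInt_toZMod_eq_zero_iff.mpr hB) (padicInt_toZMod_ne_zero_iff.mpr hA) hsq
  have coe_inj {u v : ℤ_[p]} : (u : ℚ_[p]) = v ↔ u = v := Subtype.coe_inj
  have solution_iff (w : ℤ_[p]) :
      ‖(w : ℚ_[p])‖ = 1 ∧ (w : ℚ_[p]) ^ 3 + A * w = B ↔ (w : ℚ_[p]) = x ∨ (w : ℚ_[p]) = y := by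
    simpa only [← PadicInt.coe_add, ← PadicInt.coe_mul, ← PadicInt.coe_pow, coe_inj,
      PadicInt.padic_norm_e_of_padicInt, PadicInt.isUnit_iff] using h w
  refine ⟨x, y, coe_inj.not.mpr hxy, fun w ↦ ⟨fun hw ↦ (solution_iff ⟨w, hw.1.le⟩).mp hw, ?_⟩⟩
  rintro (rfl | rfl)
  · exact (solution_iff x).mpr (.inl rfl)
  · exact (solution_iff y).mpr (.inr rfl)

end Padic

theorem stmt_11_general (p : ℕ) [Fact p.Prime] (hp : p ≠ 2) (a b : ℚ_[p])
    (hnb : ‖b‖ < 1) (hna : ‖a‖ = 1) (a0 : ℕ)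
    (hdigit : ‖a * (p : ℚ_[p]) ^ (-a.valuation) - (a0 : ℚ_[p])‖ < 1)
    (hres : (-(a0 : ZMod p)) ^ ((p - 1) / 2) = 1) :
    ∃ x y : ℚ_[p], x ≠ y ∧
      (‖x‖ = 1 ∧ x ^ 3 + a * x = b) ∧
      (‖y‖ = 1 ∧ y ^ 3 + a * y = b) ∧
      (∀ w : ℚ_[p], ‖w‖ = 1 → w ^ 3 + a * w = b → w = x ∨ w = y) := by
  obtain ⟨a, rfl⟩ : ∃ A : ℤ_[p], (A : ℚ_[p]) = a := ⟨⟨a, hna.le⟩, rfl⟩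
  obtain ⟨b, rfl⟩ : ∃ B : ℤ_[p], (B : ℚ_[p]) = b := ⟨⟨b, hnb.le⟩, rfl⟩
  rw [padic_valuation_eq_zero_of_norm_eq_one hna, neg_zero, zpow_zero, mul_one,
    ← padicInt_toZMod_eq_natCast_iff] at hdigit
  have toZMod_ne_zero : PadicInt.toZMod a ≠ 0 := padicInt_toZMod_ne_zero_iff.mpr hna
  have p_odd : p % 2 = 1 := (Fact.out : p.Prime).mod_two_eq_one_iff_ne_two.mpr hp
  have hsq : IsSquare (-PadicInt.toZMod a) := by
    rwa [ZMod.euler_criterion p (neg_ne_zero.mpr toZMod_ne_zero), hdigit,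
      show p / 2 = (p - 1) / 2 by lia]
  obtain ⟨x, y, hxy, h⟩ := exists_pair_padic_cubic_eq_iff hp hnb hna hsq
  exact ⟨x, y, hxy, (h x).mpr (.inl rfl), (h y).mpr (.inr rfl), fun w hw hwb ↦ (h w).mp ⟨hw, hwb⟩⟩

/-- For a prime `p > 3` and nonzero `a b : ℚ_p` with `|b|_p < 1`, `|a|_p = 1`
and `(−a₀)^((p−1)/2) ≡ 1 (mod p)`, the equation `x³ + a·x = b` has exactly two distinct
solutions with `|x|_p = 1`. -/
theorem stmt_11 (p : ℕ) [Fact p.Prime] (hp : 3 < p)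
    (a b : ℚ_[p]) (ha : a ≠ 0) (hb : b ≠ 0)
    (hnb : ‖b‖ < 1) (hna : ‖a‖ = 1)
    (a0 : ℕ) (ha0l : 1 ≤ a0) (ha0u : a0 < p)
    (hdigit : ‖a * (p : ℚ_[p]) ^ (-a.valuation) - (a0 : ℚ_[p])‖ < 1)
    (hres : (-(a0 : ZMod p)) ^ ((p - 1) / 2) = 1) :
    ∃ x y : ℚ_[p], x ≠ y ∧
      (‖x‖ = 1 ∧ x ^ 3 + a * x = b) ∧
      (‖y‖ = 1 ∧ y ^ 3 + a * y = b) ∧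
      (∀ w : ℚ_[p], ‖w‖ = 1 → w ^ 3 + a * w = b → w = x ∨ w = y) := by
  exact stmt_11_general p (by lia) a b hnb hna a0 hdigit hres
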